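/- Fix a finite terminal set K of size k ≥ 2 and set p = 2^{k−1}−1. The convex cone M_k of minimum terminal cut vectors of weighted graphs with terminal set K is full-dimensional in ℝ^p: its affine span is all of ℝ^p (equivalently, M_k has nonempty interior, i.e. nonzero p-dimensional volume). -/

import Mathlib

open scoped Classical

/-- A weighted graph with a distinguished embedded set of terminals indexed by `κ`:
a finite vertex type `V`, an embedding `ι : κ ↪ V` of the terminals, and a symmetric
nonnegative capacity function `c` on pairs of vertices. -/
structure WeightedGraph (κ : Type) where
  V : Type
  [fintypeV : Fintype V]
  ι : κ ↪ V
  c : V → V → ℝ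
  symm : ∀ u v, c u v = c v u
  nonneg : ∀ u v, 0 ≤ c u v

namespace WeightedGraph

variable {κ : Type}

instance (G : WeightedGraph κ) : Fintype G.V := G.fintypeV

/-- The cut function `h_G(A) = Σ_{u ∈ A, v ∉ A} c(u,v)`. -/
noncomputable def cutval (G : WeightedGraph κ) (A : Finset G.V) : ℝ :=
  ∑ u ∈ A, ∑ v ∈ Aᶜ, G.c u v

/-- The vertex sets realizing the terminal partition `(U, K \ U)`. -/
noncomputable def cutSets (G : WeightedGraph κ) (U : Finset κ) : Finset (Finset G.V) :=
  Finset.univ.filter fun A => ∀ x : κ, G.ι x ∈ A ↔ x ∈ U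

theorem cutSets_nonempty (G : WeightedGraph κ) (U : Finset κ) : (G.cutSets U).Nonempty := by
  refine ⟨U.image G.ι, ?_⟩
  simp [cutSets, Finset.mem_image, G.ι.injective.eq_iff]

/-- The terminal cut function `h_K^G(U) = min { h_G(A) : A ∩ K = U }`. -/
noncomputable def termCut (G : WeightedGraph κ) (U : Finset κ) : ℝ :=
  (G.cutSets U).inf' (G.cutSets_nonempty U) G.cutval

/-- `H` is a mimicking network for `(G, K)`: all minimum terminal cut values agree. -/
def IsMimicking (G H : WeightedGraph κ) : Prop :=
  ∀ U : Finset κ, H.termCut U = G.termCut U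

/-- `H` is a quotient (contraction) of `G` along the surjection `f`: terminals map to
terminals, and capacities between distinct classes are sums of the original capacities. -/
def IsQuotient (G H : WeightedGraph κ) (f : G.V → H.V) : Prop :=
  Function.Surjective f ∧ (∀ x : κ, f (G.ι x) = H.ι x) ∧
    ∀ y z : H.V, y ≠ z →
      H.c y z = ∑ u ∈ Finset.univ.filter (fun u => f u = y),
        ∑ v ∈ Finset.univ.filter (fun v => f v = z), G.c u v

end WeightedGraph

/-- The index set of the `p = 2^(k-1) - 1` terminal cuts: nonempty subsets `U ⊆ K`
avoiding the fixed terminal `t` (= `v_k`). -/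
def CutIndex (κ : Type) (t : κ) := {U : Finset κ // U.Nonempty ∧ t ∉ U}

/-- The minimum terminal cut vector (MTCV) of `G`: the vector of all minimum terminal
cut values, indexed by `CutIndex κ t`. -/
noncomputable def mtcv {κ : Type} (G : WeightedGraph κ) (t : κ) : CutIndex κ t → ℝ :=
  fun U => G.termCut U.1

/-- `M_k`: the set of minimum terminal cut vectors of all weighted graphs with
terminal set `K` (indexed by `κ`). -/
def MTCVSet (κ : Type) (t : κ) : Set (CutIndex κ t → ℝ) :=
  {m | ∃ G : WeightedGraph κ, m = mtcv G t}

/-!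
Join a new vertex to every terminal, with capacities `w`. The cut at `U ⊆ K` costs
`min (w U) (w Uᶜ)`, since the only choice is the side on which the new vertex lies. Take `w` to be
`1` on `S` and `a` on the distinguished terminal `t ∉ S ∪ U`: the cost is
`min |S ∩ U| (|S \ U| + a)`. Lowering `a` from `|S|` to `|S| - 1` lowers this minimum, by `1`,
exactly when `S ⊆ U`. Hence the directions of `M_k` contain the indicators of all up-sets
`{U | S ⊆ U}`, and these span by Möbius inversion.
-/

open scoped NNReal Finset

theorem span_range_indicator_Ici (R α : Type*) [Ring R] [PartialOrder α] [Finite α] :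
    Submodule.span R (Set.range fun a : α => (Set.Ici a).indicator (1 : α → R)) = ⊤ := by
  have := Fintype.ofFinite α
  rw [eq_top_iff, ← (Pi.basisFun R α).span_eq, Submodule.span_le, Set.range_subset_iff]
  intro a
  induction a using WellFoundedGT.induction with
  | ind a ih =>
    have indicator_eq_single_add_sum : (Set.Ici a).indicator (1 : α → R) =
        Pi.basisFun R α a + ∑ b with a < b, Pi.basisFun R α b := by
      ext c
      by_cases hac : a = c
      · simp [hac, Finset.sum_apply, Pi.single_apply]
      · simp [hac, Finset.sum_apply, Pi.single_apply, Set.indicator_apply, le_iff_eq_or_lt,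
          eq_comm (a := c)]
    rw [SetLike.mem_coe, ← Submodule.add_mem_iff_left _
      (Submodule.sum_mem _ fun b hb => ih b (Finset.mem_filter.mp hb).2),
      ← indicator_eq_single_add_sum]
    exact Submodule.subset_span (Set.mem_range_self a)

theorem min_card_sub_min_card_eq_ite_subset (R : Type*) {α : Type*} [CommRing R] [LinearOrder R]
    [IsStrictOrderedRing R] [DecidableEq α] (S U : Finset α) :
    min (#(S ∩ U) : R) (#(S \ U) + #S) - min (#(S ∩ U) : R) (#(S \ U) + (#S - 1)) =
      if S ⊆ U then 1 else 0 := by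
  have card_add_card : (#(S \ U) : R) + #(S ∩ U) = #S := by
    exact_mod_cast Finset.card_sdiff_add_card_inter S U
  split_ifs with hSU
  · have card_sdiff : (#(S \ U) : R) = 0 := by simpa using hSU
    rw [min_eq_left (by linarith), min_eq_right (by linarith)]
    linarith
  · have one_le_card_sdiff : (1 : R) ≤ #(S \ U) := by
      exact_mod_cast Finset.card_pos.2 (Finset.sdiff_nonempty.2 hSU)
    rw [min_eq_left (by linarith), min_eq_left (by linarith), sub_self]

namespace WeightedGraph

variable {κ : Type}

theorem mem_cutSets {G : WeightedGraph κ} {U : Finset κ} {A : Finset G.V} :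
    A ∈ G.cutSets U ↔ ∀ x, G.ι x ∈ A ↔ x ∈ U := by
  simp [cutSets]

theorem cutval_eq_sum_ite (G : WeightedGraph κ) (A : Finset G.V) :
    G.cutval A = ∑ u, ∑ v, if u ∈ A ∧ v ∉ A then G.c u v else 0 := by
  simp only [cutval, ite_and, ← Finset.mem_compl, Finset.sum_ite_mem, Finset.univ_inter,
    Finset.sum_ite_irrel, Finset.sum_const_zero]

variable [Fintype κ]

/-- The star whose leaves are the terminals and whose centre `none` is the only other vertex; the
edge at the terminal `x` has capacity `w x`. -/
noncomputable abbrev star (w : κ → ℝ≥0) : WeightedGraph κ where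
  V := Option κ
  ι := Function.Embedding.some
  c
    | none, some x => w x
    | some x, none => w x
    | _, _ => 0
  symm := by rintro (_ | u) (_ | v) <;> rfl
  nonneg := by rintro (_ | u) (_ | v) <;> simp

theorem cutval_star (w : κ → ℝ≥0) {U : Finset κ} {A : Finset (Option κ)}
    (hA : ∀ x, some x ∈ A ↔ x ∈ U) :
    (star w).cutval A = if none ∈ A then ∑ x ∈ Uᶜ, (w x : ℝ) else ∑ x ∈ U, (w x : ℝ) := by
  rw [cutval_eq_sum_ite, ← Fintype.sum_ite_mem U, ← Fintype.sum_ite_mem Uᶜ]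
  by_cases h : none ∈ A <;> simp [Fintype.sum_option, hA, h]

theorem termCut_star (w : κ → ℝ≥0) (U : Finset κ) :
    (star w).termCut U = min (∑ x ∈ U, (w x : ℝ)) (∑ x ∈ Uᶜ, (w x : ℝ)) := by
  refine le_antisymm (le_min ?_ ?_) (Finset.le_inf' _ _ fun A hA => ?_)
  · have hU : ∀ x, some x ∈ U.map .some ↔ x ∈ U := by simp
    exact (Finset.inf'_le _ (mem_cutSets.2 hU)).trans_eq ((cutval_star w hU).trans (by simp))
  · have hU : ∀ x, some x ∈ U.insertNone ↔ x ∈ U := by simp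
    exact (Finset.inf'_le _ (mem_cutSets.2 hU)).trans_eq ((cutval_star w hU).trans (by simp))
  · rw [cutval_star w (mem_cutSets.1 hA)]
    split_ifs
    exacts [min_le_right _ _, min_le_left _ _]

end WeightedGraph

namespace CutIndex

instance (κ : Type) (t : κ) : PartialOrder (CutIndex κ t) := Subtype.partialOrder _

instance (κ : Type) [Finite κ] (t : κ) : Finite (CutIndex κ t) := Subtype.finite

end CutIndex

section MTCV

variable {κ : Type} (t : κ)

/-- The capacities of a star that gives weight `1` to each terminal in `S` and an additional
weight `a` to the terminal `t`. -/
noncomputable def pivotWeight (S : Finset κ) (a : ℝ≥0) : κ → ℝ≥0 :=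
  (S : Set κ).indicator 1 + Pi.single t a

theorem sum_pivotWeight (S U : Finset κ) (a : ℝ≥0) :
    ∑ x ∈ U, pivotWeight t S a x = #(S ∩ U) + if t ∈ U then a else 0 := by
  simp [pivotWeight, Finset.sum_add_distrib, Set.indicator_apply, Finset.inter_comm]

theorem mtcv_star_pivotWeight [Fintype κ] (S : Finset κ) (a : ℝ≥0) (U : CutIndex κ t) :
    mtcv (.star (pivotWeight t S a)) t U = min (#(S ∩ U.1) : ℝ) (#(S \ U.1) + a) := by
  rw [mtcv, WeightedGraph.termCut_star, ← NNReal.coe_sum, ← NNReal.coe_sum, sum_pivotWeight,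
    sum_pivotWeight, ← Finset.sdiff_eq_inter_compl]
  simp [U.2.2]

theorem indicator_Ici_mem_vectorSpan_mtcvSet [Finite κ] (S : CutIndex κ t) :
    (Set.Ici S).indicator 1 ∈ vectorSpan ℝ (MTCVSet κ t) := by
  have := Fintype.ofFinite κ
  have one_le_card : (1 : ℝ≥0) ≤ #S.1 := by exact_mod_cast S.2.1.card_pos
  convert vsub_mem_vectorSpan ℝ (s := MTCVSet κ t)
    ⟨.star (pivotWeight t S.1 #S.1), rfl⟩ ⟨.star (pivotWeight t S.1 (#S.1 - 1)), rfl⟩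
  ext U
  rw [vsub_eq_sub, Pi.sub_apply, mtcv_star_pivotWeight, mtcv_star_pivotWeight,
    NNReal.coe_sub one_le_card, NNReal.coe_natCast, NNReal.coe_one,
    min_card_sub_min_card_eq_ite_subset]
  split_ifs with hSU
  exacts [Set.indicator_of_mem (s := Set.Ici S) hSU 1,
    Set.indicator_of_notMem (s := Set.Ici S) hSU 1]

end MTCV

/-- for `k ≥ 2` the convex cone `M_k` of minimum terminal cut vectors is
full-dimensional in `ℝ^p`, `p = 2^(k-1) - 1`: its affine span is all of `ℝ^p`. -/
theorem mtcvSet_full_dimensional (κ : Type) [Fintype κ] (t : κ)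
    (hk : 2 ≤ Fintype.card κ) :
    affineSpan ℝ (MTCVSet κ t) = ⊤ := by
  have nonempty : (MTCVSet κ t).Nonempty := ⟨_, .star 0, rfl⟩
  rw [AffineSubspace.affineSpan_eq_top_iff_vectorSpan_eq_top_of_nonempty ℝ _ _ nonempty,
    eq_top_iff, ← span_range_indicator_Ici ℝ (CutIndex κ t), Submodule.span_le,
    Set.range_subset_iff]
  exact indicator_Ici_mem_vectorSpan_mtcvSet t
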